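/- arXiv:2410.04879 — 5 statements merged into one kernel-verified Lean document; each statement's English description precedes it below -/
import Mathlib

section
/- Let F : I → ℝ be defined by F(x) = ∫_p^x e^{α(r)} dr. Then F is strictly increasing and continuous, and F is a bijection from I onto ℝ if and only if the function r ↦ e^{α(r)} is not Lebesgue-integrable on (a,p) and not Lebesgue-integrable on (p,b) (i.e. both integrals ∫_a^p e^{α(r)} dr and ∫_p^b e^{α(r)} dr are infinite). -/
open MeasureTheory Set

theorem aux_right (g : ℝ → ℝ) (p : ℝ) (T : Set ℝ) (hT : T.OrdConnected) (hTp : ∀ x ∈ T, p < x)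
    (hne : T.Nonempty) (hpT : ∀ x ∈ T, Ioc p x ⊆ T) (hg : ∀ x, 0 < g x)
    (hi : ∀ x ∈ T, IntervalIntegrable g volume p x) :
    IntegrableOn g T ↔ ∃ C, ∀ x ∈ T, ∫ r in p..x, g r ≤ C := by
  have hm : MeasurableSet T := hT.measurableSet
  constructor
  · intro h
    refine ⟨∫ r in T, g r, fun x hx => ?_⟩
    rw [intervalIntegral.integral_of_le (hTp x hx).le]
    exact setIntegral_mono_set h (Filter.Eventually.of_forall fun x => (hg x).le)
      (LE.le.eventuallyLE (hpT x hx))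
  · rintro ⟨C, hC⟩
    have : Nonempty T := hne.to_subtype
    have hc : AECover (volume.restrict T) (Filter.atTop : Filter T) (fun i : T => Iic (i : ℝ)) := by
      refine ⟨?_, fun i => measurableSet_Iic⟩
      refine (ae_restrict_iff' hm).2 (Filter.Eventually.of_forall fun x hx => ?_)
      filter_upwards [Filter.eventually_ge_atTop (⟨x, hx⟩ : T)] with i hi
      exact hi
    have he : ∀ i : T, Iic (i : ℝ) ∩ T = Ioc p i := by
      intro i
      ext x
      exact ⟨fun h => ⟨hTp x h.2, h.1⟩, fun h => ⟨h.2, hpT i i.2 h⟩⟩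
    refine hc.integrable_of_integral_bounded_of_nonneg_ae C (fun i => ?_)
      (Filter.Eventually.of_forall fun x => (hg x).le) (Filter.Eventually.of_forall fun i => ?_)
    · rw [IntegrableOn, Measure.restrict_restrict measurableSet_Iic, he]
      exact (hi i i.2).1
    · rw [Measure.restrict_restrict measurableSet_Iic, he,
        ← intervalIntegral.integral_of_le (hTp i i.2).le]
      exact hC i i.2

theorem aux_left (g : ℝ → ℝ) (p : ℝ) (T : Set ℝ) (hT : T.OrdConnected) (hTp : ∀ x ∈ T, x < p)
    (hne : T.Nonempty) (hpT : ∀ x ∈ T, Ico x p ⊆ T) (hg : ∀ x, 0 < g x)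
    (hi : ∀ x ∈ T, IntervalIntegrable g volume p x) :
    IntegrableOn g T ↔ ∃ C, ∀ x ∈ T, C ≤ ∫ r in p..x, g r := by
  have hm : MeasurableSet T := hT.measurableSet
  constructor
  · intro h
    refine ⟨-∫ r in T, g r, fun x hx => ?_⟩
    rw [intervalIntegral.integral_symm, intervalIntegral.integral_of_le (hTp x hx).le, neg_le_neg_iff,
      integral_Ioc_eq_integral_Ioo, ← integral_Ico_eq_integral_Ioo]
    exact setIntegral_mono_set h (Filter.Eventually.of_forall fun x => (hg x).le)
      (LE.le.eventuallyLE (hpT x hx))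
  · rintro ⟨C, hC⟩
    have : Nonempty T := hne.to_subtype
    have hc : AECover (volume.restrict T) (Filter.atBot : Filter T) (fun i : T => Ici (i : ℝ)) := by
      refine ⟨?_, fun i => measurableSet_Ici⟩
      refine (ae_restrict_iff' hm).2 (Filter.Eventually.of_forall fun x hx => ?_)
      filter_upwards [Filter.eventually_le_atBot (⟨x, hx⟩ : T)] with i hi
      exact hi
    have he : ∀ i : T, Ici (i : ℝ) ∩ T = Ico (i : ℝ) p := by
      intro i
      ext x
      exact ⟨fun h => ⟨h.1, hTp x h.2⟩, fun h => ⟨h.1, hpT i i.2 h⟩⟩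
    refine hc.integrable_of_integral_bounded_of_nonneg_ae (-C) (fun i => ?_)
      (Filter.Eventually.of_forall fun x => (hg x).le) (Filter.Eventually.of_forall fun i => ?_)
    · rw [IntegrableOn, Measure.restrict_restrict measurableSet_Ici, he]
      exact (integrableOn_Ico_iff_integrableOn_Ioo (by finiteness)).2
        (((hi i i.2).2).mono_set Ioo_subset_Ioc_self)
    · rw [Measure.restrict_restrict measurableSet_Ici, he, integral_Ico_eq_integral_Ioo,
        ← integral_Ioc_eq_integral_Ioo,
        ← intervalIntegral.integral_of_le (hTp i i.2).le, intervalIntegral.integral_symm]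
      exact neg_le_neg (hC i i.2)

/-- Let `a, b ∈ ℝ ∪ {−∞, +∞}` with `a < b`, `I = (a,b)`, `α : I → ℝ` continuous, `p ∈ I`,
and `F x = ∫_p^x e^{α r} dr`.  Then `F` is strictly increasing and continuous on `I`, and
`F` is a bijection from `I` onto `ℝ` iff `r ↦ e^{α r}` is not Lebesgue-integrable on `(a,p)`
and not Lebesgue-integrable on `(p,b)`. -/
theorem stmt_0 (a b : EReal) (hab : a < b) (α : ℝ → ℝ) (p : ℝ)
    (hp : a < (p : EReal) ∧ (p : EReal) < b)
    (hα : ContinuousOn α {x : ℝ | a < (x : EReal) ∧ (x : EReal) < b}) :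
    StrictMonoOn (fun x => ∫ r in p..x, Real.exp (α r))
      {x : ℝ | a < (x : EReal) ∧ (x : EReal) < b} ∧
    ContinuousOn (fun x => ∫ r in p..x, Real.exp (α r))
      {x : ℝ | a < (x : EReal) ∧ (x : EReal) < b} ∧
    (Set.BijOn (fun x => ∫ r in p..x, Real.exp (α r))
        {x : ℝ | a < (x : EReal) ∧ (x : EReal) < b} Set.univ ↔
      (¬ IntegrableOn (fun r => Real.exp (α r)) {x : ℝ | a < (x : EReal) ∧ x < p} ∧
       ¬ IntegrableOn (fun r => Real.exp (α r)) {x : ℝ | p < x ∧ (x : EReal) < b})) := by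
  set S : Set ℝ := {x : ℝ | a < (x : EReal) ∧ (x : EReal) < b} with hS
  set g : ℝ → ℝ := fun r => Real.exp (α r) with hgdef
  have hg : ∀ x, 0 < g x := fun x => Real.exp_pos _
  have hgc : ContinuousOn g S := Real.continuous_exp.comp_continuousOn hα
  have hSo : S.OrdConnected := ⟨fun x hx y hy z hz =>
    ⟨hx.1.trans_le (EReal.coe_le_coe_iff.2 hz.1), (EReal.coe_le_coe_iff.2 hz.2).trans_lt hy.2⟩⟩
  have hSopen : IsOpen S :=
    (isOpen_lt continuous_const continuous_coe_real_ereal).inter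
      (isOpen_lt continuous_coe_real_ereal continuous_const)
  have hpS : p ∈ S := hp
  have hi : ∀ x ∈ S, ∀ y ∈ S, IntervalIntegrable g volume x y := fun x hx y hy =>
    (hgc.mono (hSo.uIcc_subset hx hy)).intervalIntegrable
  have hmono : StrictMonoOn (fun x => ∫ r in p..x, g r) S := by
    intro x hx y hy hxy
    have h1 := intervalIntegral.integral_add_adjacent_intervals (hi p hpS x hx) (hi x hx y hy)
    have h2 := intervalIntegral.intervalIntegral_pos_of_pos (hi x hx y hy) hg hxy
    show ∫ r in p..x, g r < ∫ r in p..y, g r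
    linarith
  have hcont : ContinuousOn (fun x => ∫ r in p..x, g r) S := by
    intro x hx
    have := intervalIntegral.integral_hasDerivAt_right (hi p hpS x hx)
      (hgc.stronglyMeasurableAtFilter hSopen x hx) (hgc.continuousAt (hSopen.mem_nhds hx))
    exact this.continuousAt.continuousWithinAt
  refine ⟨hmono, hcont, ?_⟩
  have hF0 : ∫ r in p..p, g r = 0 := intervalIntegral.integral_same
  have hL := aux_left g p {x : ℝ | a < (x : EReal) ∧ x < p}
    ⟨fun x hx y hy z hz => ⟨hx.1.trans_le (EReal.coe_le_coe_iff.2 hz.1), hz.2.trans_lt hy.2⟩⟩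
    (fun x hx => hx.2)
    (by obtain ⟨c, h1, h2⟩ := EReal.lt_iff_exists_real_btwn.1 hp.1
        exact ⟨c, h1, EReal.coe_lt_coe_iff.1 h2⟩)
    (fun x hx z hz => ⟨hx.1.trans_le (EReal.coe_le_coe_iff.2 hz.1), hz.2⟩) hg
    (fun x hx => hi p hpS x ⟨hx.1, (EReal.coe_lt_coe_iff.2 hx.2).trans hp.2⟩)
  have hR := aux_right g p {x : ℝ | p < x ∧ (x : EReal) < b}
    ⟨fun x hx y hy z hz => ⟨hx.1.trans_le hz.1, (EReal.coe_le_coe_iff.2 hz.2).trans_lt hy.2⟩⟩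
    (fun x hx => hx.1)
    (by obtain ⟨c, h1, h2⟩ := EReal.lt_iff_exists_real_btwn.1 hp.2
        exact ⟨c, EReal.coe_lt_coe_iff.1 h1, h2⟩)
    (fun x hx z hz => ⟨hz.1, (EReal.coe_le_coe_iff.2 hz.2).trans_lt hx.2⟩) hg
    (fun x hx => hi p hpS x ⟨hp.1.trans (EReal.coe_lt_coe_iff.2 hx.1), hx.2⟩)
  rw [hL, hR]
  constructor
  · intro hbij
    constructor
    · rintro ⟨C, hC⟩
      obtain ⟨x, hx, hxe⟩ := hbij.surjOn (mem_univ (min C 0 - 1))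
      have hxe : ∫ r in p..x, g r = min C 0 - 1 := hxe
      rcases lt_or_ge x p with h | h
      · have := hC x ⟨hx.1, h⟩
        have := min_le_left C 0
        linarith
      · have h3 : ∫ r in p..p, g r ≤ ∫ r in p..x, g r := hmono.monotoneOn hpS hx h
        have := min_le_right C 0
        linarith
    · rintro ⟨C, hC⟩
      obtain ⟨x, hx, hxe⟩ := hbij.surjOn (mem_univ (max C 0 + 1))
      have hxe : ∫ r in p..x, g r = max C 0 + 1 := hxe
      rcases lt_or_ge p x with h | h
      · have := hC x ⟨h, hx.2⟩
        have := le_max_left C 0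
        linarith
      · have h3 : ∫ r in p..x, g r ≤ ∫ r in p..p, g r := hmono.monotoneOn hx hpS h
        have := le_max_right C 0
        linarith
  · rintro ⟨h1, h2⟩
    push Not at h1 h2
    refine ⟨mapsTo_univ _ _, hmono.injOn, fun y _ => ?_⟩
    obtain ⟨u, hu, huy⟩ := h1 y
    obtain ⟨v, hv, hvy⟩ := h2 y
    have huS : u ∈ S := ⟨hu.1, (EReal.coe_lt_coe_iff.2 hu.2).trans hp.2⟩
    have hvS : v ∈ S := ⟨hp.1.trans (EReal.coe_lt_coe_iff.2 hv.1), hv.2⟩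
    exact hSo.isPreconnected.intermediate_value huS hvS hcont ⟨huy.le, hvy.le⟩
end

section
/- Define d : I × I → ℝ by d(x,y) = ∫_{[min(x,y), max(x,y)]} e^{α(r)} dr. Then d is a metric on I, and the metric space (I, d) is complete if and only if the function r ↦ e^{α(r)} is not Lebesgue-integrable on (a,p) and not Lebesgue-integrable on (p,b). -/
open MeasureTheory Set

theorem aux_cover (f : ℝ → ℝ) (hf : ∀ x, 0 ≤ f x) (S : Set ℝ) (hS : MeasurableSet S)
    (φ : ℕ → Set ℝ) (hφm : ∀ n, MeasurableSet (φ n)) (hφS : ∀ n, φ n ⊆ S)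
    (hφ : ∀ x ∈ S, ∀ᶠ n in Filter.atTop, x ∈ φ n)
    (hi : ∀ n, IntegrableOn f (φ n)) (M : ℝ) (hM : ∀ n, ∫ x in φ n, f x ≤ M) :
    IntegrableOn f S := by
  have hc : AECover (volume.restrict S) Filter.atTop φ :=
    ⟨(ae_restrict_iff' hS).2 (Filter.Eventually.of_forall hφ), hφm⟩
  have hr : ∀ n, (volume.restrict S).restrict (φ n) = volume.restrict (φ n) := fun n =>
    Measure.restrict_restrict_of_subset (hφS n)
  refine hc.integrable_of_integral_bounded_of_nonneg_ae M ?_ (Filter.Eventually.of_forall hf)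
    (Filter.Eventually.of_forall ?_)
  · intro n
    rw [IntegrableOn, hr]
    exact hi n
  · intro n
    rw [hr]
    exact hM n

/-- Let `a, b ∈ ℝ ∪ {−∞, +∞}` with `a < b`, `I = (a,b)`, `α : I → ℝ` continuous, `p ∈ I`.
Then `d(x,y) = ∫_{[min(x,y),max(x,y)]} e^{α r} dr` is a metric on `I` (i.e. there is a metric
space structure on `I` whose distance is `d`), and the metric space `(I,d)` is complete iff
`r ↦ e^{α r}` is not Lebesgue-integrable on `(a,p)` and not on `(p,b)`. -/
theorem stmt_1 (a b : EReal) (hab : a < b) (α : ℝ → ℝ) (p : ℝ)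
    (hp : a < (p : EReal) ∧ (p : EReal) < b)
    (hα : ContinuousOn α {x : ℝ | a < (x : EReal) ∧ (x : EReal) < b}) :
    ∃ m : MetricSpace {x : ℝ // a < (x : EReal) ∧ (x : EReal) < b},
      (∀ x y : {x : ℝ // a < (x : EReal) ∧ (x : EReal) < b},
        m.dist x y = ∫ r in Set.Icc (min x.1 y.1) (max x.1 y.1), Real.exp (α r)) ∧
      (@CompleteSpace _ m.toUniformSpace ↔
        (¬ IntegrableOn (fun r => Real.exp (α r)) {x : ℝ | a < (x : EReal) ∧ x < p} ∧
         ¬ IntegrableOn (fun r => Real.exp (α r)) {x : ℝ | p < x ∧ (x : EReal) < b})) := by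
  set I : Set ℝ := {x : ℝ | a < (x : EReal) ∧ (x : EReal) < b} with hI
  set f : ℝ → ℝ := fun r => Real.exp (α r) with hf
  have hfpos : ∀ x, 0 < f x := fun x => Real.exp_pos _
  have hord : I.OrdConnected := by
    refine ⟨fun x hx y hy z hz => ⟨hx.1.trans_le ?_, lt_of_le_of_lt ?_ hy.2⟩⟩
    · exact_mod_cast hz.1
    · exact_mod_cast hz.2
  have hmeasA : MeasurableSet {x : ℝ | a < (x : EReal) ∧ x < p} :=
    (measurableSet_lt measurable_const measurable_coe_real_ereal).inter measurableSet_Iio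
  have hmeasB : MeasurableSet {x : ℝ | p < x ∧ (x : EReal) < b} :=
    measurableSet_Ioi.inter (measurableSet_lt measurable_coe_real_ereal measurable_const)
  have hfc : ContinuousOn f I := hα.rexp
  have hpI : p ∈ I := hp
  have hint : ∀ x ∈ I, ∀ y ∈ I, IntervalIntegrable f volume x y := fun x hx y hy =>
    (hfc.mono (hord.uIcc_subset hx hy)).intervalIntegrable
  set F : ℝ → ℝ := fun x => ∫ r in p..x, f r with hF
  have hsub : ∀ x ∈ I, ∀ y ∈ I, F y - F x = ∫ r in x..y, f r := fun x hx y hy =>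
    intervalIntegral.integral_interval_sub_left (hint p hpI y hy) (hint p hpI x hx)
  have hmono : StrictMonoOn F I := by
    intro x hx y hy hxy
    have := intervalIntegral.intervalIntegral_pos_of_pos (hint x hx y hy) hfpos hxy
    rw [← hsub x hx y hy] at this
    linarith
  have hdist : ∀ x ∈ I, ∀ y ∈ I, |F x - F y| = ∫ r in Set.Icc (min x y) (max x y), f r := by
    have key : ∀ x ∈ I, ∀ y ∈ I, x ≤ y → |F x - F y| = ∫ r in Set.Icc x y, f r := by
      intro x hx y hy hxy
      rw [integral_Icc_eq_integral_Ioc, ← intervalIntegral.integral_of_le hxy,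
        ← hsub x hx y hy, abs_sub_comm, abs_of_nonneg]
      exact sub_nonneg.2 (hmono.monotoneOn hx hy hxy)
    intro x hx y hy
    rcases le_total x y with h | h
    · rw [min_eq_left h, max_eq_right h, key x hx y hy h]
    · rw [min_eq_right h, max_eq_left h, abs_sub_comm, key y hy x hx h]
  have hopen : IsOpen I :=
    (isOpen_lt continuous_const continuous_coe_real_ereal).inter
      (isOpen_lt continuous_coe_real_ereal continuous_const)
  have hFc : ContinuousOn F I := by
    intro x hx
    have h1 : HasDerivAt F (f x) x := 
      intervalIntegral.integral_hasDerivAt_right (hint p hpI x hx)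
        (hfc.stronglyMeasurableAtFilter hopen x hx) (hfc.continuousAt (hopen.mem_nhds hx))
    exact h1.continuousAt.continuousWithinAt
  let G : {x : ℝ // a < (x : EReal) ∧ (x : EReal) < b} → ℝ := fun x => F x.1
  have hGinj : Function.Injective G := fun x y h =>
    Subtype.ext (hmono.injOn x.2 y.2 h)
  have hrange : Set.range G = F '' I := by
    ext z; constructor
    · rintro ⟨x, rfl⟩; exact ⟨x.1, x.2, rfl⟩
    · rintro ⟨x, hx, rfl⟩; exact ⟨⟨x, hx⟩, rfl⟩
  have hgt : ∀ x ∈ I, ∃ y ∈ I, x < y := by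
    intro x hx
    obtain ⟨y, h1, h2⟩ := EReal.lt_iff_exists_real_btwn.1 hx.2
    exact ⟨y, ⟨hx.1.trans h1, h2⟩, by exact_mod_cast h1⟩
  have hlt : ∀ x ∈ I, ∃ y ∈ I, y < x := by
    intro x hx
    obtain ⟨y, h1, h2⟩ := EReal.lt_iff_exists_real_btwn.1 hx.1
    exact ⟨y, ⟨h1, h2.trans hx.2⟩, by exact_mod_cast h2⟩
  have hFp : F p = 0 := intervalIntegral.integral_same
  have hupper : IntegrableOn f {x : ℝ | p < x ∧ (x : EReal) < b} ↔ BddAbove (F '' I) := by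
    constructor
    · intro h
      refine ⟨∫ r in {x : ℝ | p < x ∧ (x : EReal) < b}, f r, ?_⟩
      rintro _ ⟨x, hx, rfl⟩
      rcases le_total x p with hxp | hxp
      · calc F x ≤ F p := hmono.monotoneOn hx hpI hxp
          _ = 0 := hFp
          _ ≤ _ := integral_nonneg fun x => (hfpos x).le
      · show (∫ r in p..x, f r) ≤ _
        rw [intervalIntegral.integral_of_le hxp]
        refine setIntegral_mono_set h (Filter.Eventually.of_forall fun x => (hfpos x).le) 
          (LE.le.eventuallyLE ?_)
        intro z hz
        exact ⟨hz.1, lt_of_le_of_lt (by exact_mod_cast hz.2) hx.2⟩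
    · rintro ⟨M, hM⟩
      obtain ⟨u, -, hu, hlim⟩ := exists_seq_strictMono_tendsto' hp.2
      have huc : ∀ n, ((u n).toReal : EReal) = u n := fun n =>
        EReal.coe_toReal (ne_top_of_lt (hu n).2) (ne_bot_of_gt (hu n).1)
      have hpu : ∀ n, p < (u n).toReal := fun n => by
        have := (hu n).1
        rw [← huc n] at this
        exact_mod_cast this
      have huI : ∀ n, (u n).toReal ∈ I := fun n => by
        constructor
        · rw [huc]; exact hp.1.trans (hu n).1
        · rw [huc]; exact (hu n).2
      refine aux_cover f (fun x => (hfpos x).le) _ hmeasB (fun n => Ioc p (u n).toReal)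
        (fun n => measurableSet_Ioc) ?_ ?_ ?_ M ?_
      · intro n z hz
        exact ⟨hz.1, lt_of_le_of_lt (by exact_mod_cast hz.2) (huI n).2⟩
      · intro x hx
        filter_upwards [hlim.eventually (lt_mem_nhds hx.2)] with n hn
        rw [← huc n] at hn
        exact ⟨hx.1, by exact_mod_cast hn.le⟩
      · intro n
        exact (intervalIntegrable_iff_integrableOn_Ioc_of_le (hpu n).le).1 (hint p hpI _ (huI n))
      · intro n
        rw [← intervalIntegral.integral_of_le (hpu n).le]
        exact hM ⟨_, huI n, rfl⟩
  have hlower : IntegrableOn f {x : ℝ | a < (x : EReal) ∧ x < p} ↔ BddBelow (F '' I) := by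
    have hneg : ∀ x, x ≤ p → F x = - ∫ r in Ioo x p, f r := fun x hx => by
      show (∫ r in p..x, f r) = _
      rw [intervalIntegral.integral_of_ge hx, integral_Ioc_eq_integral_Ioo]
    constructor
    · intro h
      refine ⟨- ∫ r in {x : ℝ | a < (x : EReal) ∧ x < p}, f r, ?_⟩
      rintro _ ⟨x, hx, rfl⟩
      rcases le_total x p with hxp | hxp
      · rw [hneg x hxp, neg_le_neg_iff]
        refine setIntegral_mono_set h (Filter.Eventually.of_forall fun x => (hfpos x).le) 
          (LE.le.eventuallyLE ?_)
        intro z hz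
        exact ⟨hx.1.trans (by exact_mod_cast hz.1), hz.2⟩
      · have h1 : F p ≤ F x := hmono.monotoneOn hpI hx hxp
        have h2 : 0 ≤ ∫ r in {x : ℝ | a < (x : EReal) ∧ x < p}, f r :=
          integral_nonneg fun x => (hfpos x).le
        linarith
    · rintro ⟨M, hM⟩
      obtain ⟨u, -, hu, hlim⟩ := exists_seq_strictAnti_tendsto' hp.1
      have huc : ∀ n, ((u n).toReal : EReal) = u n := fun n =>
        EReal.coe_toReal (ne_top_of_lt (hu n).2) (ne_bot_of_gt (hu n).1)
      have hpu : ∀ n, (u n).toReal < p := fun n => by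
        have := (hu n).2
        rw [← huc n] at this
        exact_mod_cast this
      have huI : ∀ n, (u n).toReal ∈ I := fun n => by
        constructor
        · rw [huc]; exact (hu n).1
        · rw [huc]; exact (hu n).2.trans hp.2
      refine aux_cover f (fun x => (hfpos x).le) _ hmeasA (fun n => Ioo (u n).toReal p)
        (fun n => measurableSet_Ioo) ?_ ?_ ?_ (-M) ?_
      · intro n z hz
        exact ⟨(huI n).1.trans (by exact_mod_cast hz.1), hz.2⟩
      · intro x hx
        filter_upwards [hlim.eventually (gt_mem_nhds hx.1)] with n hn
        rw [← huc n] at hn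
        exact ⟨by exact_mod_cast hn, hx.2⟩
      · intro n
        exact ((intervalIntegrable_iff_integrableOn_Ioc_of_le (hpu n).le).1
          (hint _ (huI n) p hpI)).mono_set Ioo_subset_Ioc_self
      · intro n
        have h1 := hM ⟨_, huI n, rfl⟩
        rw [hneg _ (hpu n).le] at h1
        linarith
  refine ⟨MetricSpace.induced G hGinj inferInstance, fun x y => hdist x.1 x.2 y.1 y.2, ?_⟩
  have hcomp : ∀ m : UniformSpace {x : ℝ // a < (x : EReal) ∧ (x : EReal) < b},
      m = UniformSpace.comap G inferInstance → (@CompleteSpace _ m ↔ IsClosed (F '' I)) := by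
    intro m hm
    have hui : @IsUniformInducing _ _ m _ G := by subst hm; exact @IsUniformInducing.mk _ _ (_) _ _ rfl
    rw [@completeSpace_iff_isComplete_range _ _ m _ _ hui, hrange]
    exact ⟨fun h => h.isClosed, fun h => h.isComplete⟩
  refine (hcomp _ rfl).trans ?_
  rw [hupper, hlower]
  have hne : (F '' I).Nonempty := ⟨_, p, hpI, rfl⟩
  constructor
  · intro hcl
    constructor
    · intro hb
      obtain ⟨x, hx, hxe⟩ := hcl.csInf_mem hne hb
      obtain ⟨y, hy, hyx⟩ := hlt x hx
      have h1 := csInf_le hb ⟨y, hy, rfl⟩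
      have h2 := hmono hy hx hyx
      linarith
    · intro hb
      obtain ⟨x, hx, hxe⟩ := hcl.csSup_mem hne hb
      obtain ⟨y, hy, hyx⟩ := hgt x hx
      have h1 := le_csSup hb ⟨y, hy, rfl⟩
      have h2 := hmono hx hy hyx
      linarith
  · rintro ⟨hb, ht⟩
    have hpre : IsPreconnected (F '' I) := hord.isPreconnected.image F hFc
    have : F '' I = univ := by
      refine eq_univ_of_forall fun z => ?_
      obtain ⟨l, hl, hlz⟩ := not_bddBelow_iff.1 hb z
      obtain ⟨r, hr, hrz⟩ := not_bddAbove_iff.1 ht z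
      exact hpre.Icc_subset hl hr ⟨hlz.le, hrz.le⟩
    rw [this]
    exact isClosed_univ
end

section
/- There exists a twice continuously differentiable function γ : ℝ → I satisfying γ''(t) + α'(γ(t))·(γ'(t))² = 0 for all t ∈ ℝ, with γ(0) = q and γ'(0) = 1, if and only if the function r ↦ e^{α(r)} is not Lebesgue-integrable on (a,q) and not Lebesgue-integrable on (q,b). -/
open MeasureTheory Set

lemma aux_union {ι : Type} [Countable ι] (s : ι → Set ℝ) (hd : Directed (· ⊆ ·) s)
    (hm : ∀ i, MeasurableSet (s i)) (f : ℝ → ℝ) (hf : ∀ x, 0 ≤ f x)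
    (hi : ∀ i, IntegrableOn f (s i)) (M : ℝ) (hM : ∀ i, ∫ x in s i, f x ≤ M) :
    IntegrableOn f (⋃ i, s i) := by
  refine ⟨AEStronglyMeasurable.iUnion (fun i => (hi i).1), ?_⟩
  rw [hasFiniteIntegral_iff_ofReal (Filter.Eventually.of_forall hf)]
  rw [← withDensity_apply _ (MeasurableSet.iUnion hm), hd.measure_iUnion]
  refine lt_of_le_of_lt (iSup_le fun i => ?_) (ENNReal.ofReal_lt_top (r := M))
  rw [withDensity_apply _ (hm i),
    ← ofReal_integral_eq_lintegral_ofReal (hi i) (Filter.Eventually.of_forall hf)]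
  exact ENNReal.ofReal_le_ofReal (hM i)

theorem stmt_3 (a b : EReal) (hab : a < b) (α : ℝ → ℝ) (q : ℝ)
    (hq : a < (q : EReal) ∧ (q : EReal) < b)
    (hα : ContDiffOn ℝ 1 α {x : ℝ | a < (x : EReal) ∧ (x : EReal) < b}) :
    (∃ γ : ℝ → ℝ, ContDiff ℝ 2 γ ∧
        (∀ t : ℝ, a < (γ t : EReal) ∧ (γ t : EReal) < b) ∧
        (∀ t : ℝ, deriv (deriv γ) t + deriv α (γ t) * (deriv γ t) ^ 2 = 0) ∧
        γ 0 = q ∧ deriv γ 0 = 1) ↔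
      (¬ IntegrableOn (fun r => Real.exp (α r)) {x : ℝ | a < (x : EReal) ∧ x < q} ∧
       ¬ IntegrableOn (fun r => Real.exp (α r)) {x : ℝ | q < x ∧ (x : EReal) < b}) := by
  set I : Set ℝ := {x : ℝ | a < (x : EReal) ∧ (x : EReal) < b} with hI
  have hIo : IsOpen I :=
    (isOpen_lt continuous_const continuous_coe_real_ereal).inter
      (isOpen_lt continuous_coe_real_ereal continuous_const)
  have hIc : OrdConnected I := ⟨fun x hx y hy z hz =>
    ⟨hx.1.trans_le (EReal.coe_le_coe_iff.2 hz.1), (EReal.coe_le_coe_iff.2 hz.2).trans_lt hy.2⟩⟩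
  have hqI : q ∈ I := hq
  set f : ℝ → ℝ := fun r => Real.exp (α r) with hf
  have hfpos : ∀ x, 0 < f x := fun x => Real.exp_pos _
  have hfc : ContinuousOn f I := hα.continuousOn.rexp
  have hint : ∀ x ∈ I, ∀ y ∈ I, IntervalIntegrable f volume x y := fun x hx y hy =>
    (hfc.mono (hIc.uIcc_subset hx hy)).intervalIntegrable
  have hαd : ∀ x ∈ I, HasDerivAt α (deriv α x) x := fun x hx =>
    ((hα.contDiffAt (hIo.mem_nhds hx)).differentiableAt (by simp)).hasDerivAt
  set F : ℝ → ℝ := fun x => ∫ r in q..x, f r with hF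
  have hFd : ∀ x ∈ I, HasDerivAt F (f x) x := fun x hx =>
    intervalIntegral.integral_hasDerivAt_right (hint q hqI x hx)
      (hfc.stronglyMeasurableAtFilter hIo x hx) (hfc.continuousAt (hIo.mem_nhds hx))
  have hFq : F q = 0 := by simp [hF]
  have hFc : ContinuousOn F I := fun x hx => (hFd x hx).continuousAt.continuousWithinAt
  have hFm : StrictMonoOn F I := by
    apply strictMonoOn_of_deriv_pos hIc.convex hFc
    intro x hx
    rw [(hFd x (interior_subset hx)).deriv]
    exact hfpos x
  constructor
  · rintro ⟨γ, hγ, hγI, hode, h0, h1⟩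
    have hγd : ∀ t, HasDerivAt γ (deriv γ t) t := fun t =>
      (hγ.differentiable (by simp) t).hasDerivAt
    have hγ1 : ContDiff ℝ 1 (deriv γ) :=
      ((contDiff_succ_iff_deriv (n := 1)).1 (by simpa [one_add_one_eq_two] using hγ)).2.2
    have hγdd : ∀ t, HasDerivAt (deriv γ) (deriv (deriv γ) t) t := fun t =>
      (hγ1.differentiable (by simp) t).hasDerivAt
    have hconst : ∀ t, deriv γ t * f (γ t) = f q := by
      have hd : ∀ t, HasDerivAt (fun t => deriv γ t * f (γ t)) 0 t := by
        intro t
        have h2 : HasDerivAt (fun t => f (γ t)) _ t := ((hαd _ (hγI t)).comp t (hγd t)).exp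
        have h3 := (hγdd t).mul h2
        refine h3.congr_deriv ?_
        have := hode t
        simp only [hf, Function.comp]
        linear_combination Real.exp (α (γ t)) * this
      intro t
      have := is_const_of_deriv_eq_zero (fun t => (hd t).differentiableAt)
        (fun t => (hd t).deriv) t 0
      simpa [h0, h1] using this
    have hlin : ∀ t, F (γ t) = f q * t := by
      have hd : ∀ t, HasDerivAt (fun t => F (γ t) - f q * t) 0 t := by
        intro t
        have h2 := ((hFd _ (hγI t)).comp t (hγd t)).sub ((hasDerivAt_id t).const_mul (f q))
        refine h2.congr_deriv ?_
        linear_combination hconst t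
      intro t
      have := is_const_of_deriv_eq_zero (fun t => (hd t).differentiableAt)
        (fun t => (hd t).deriv) t 0
      simp only [h0, hFq] at this
      linarith
    constructor
    · intro hi
      set M := ∫ x in {x : ℝ | a < (x : EReal) ∧ x < q}, f x with hM
      have hM0 : 0 ≤ M := integral_nonneg fun x => (hfpos x).le
      set t := -(M + 1) / f q
      have ht : F (γ t) = -(M + 1) := by
        rw [hlin]; simp only [t]; field_simp [(hfpos q).ne']
      have hlt : γ t < q := (hFm.lt_iff_lt (hγI t) hqI).1 (by rw [ht, hFq]; linarith)
      have h2 : -F (γ t) ≤ M := by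
        simp only [hF]
        rw [← intervalIntegral.integral_symm, intervalIntegral.integral_of_le hlt.le,
          integral_Ioc_eq_integral_Ioo]
        exact setIntegral_mono_set hi (Filter.Eventually.of_forall fun x => (hfpos x).le)
          (LE.le.eventuallyLE fun x hx =>
            ⟨(hγI t).1.trans (EReal.coe_lt_coe_iff.2 hx.1), hx.2⟩)
      linarith
    · intro hi
      set M := ∫ x in {x : ℝ | q < x ∧ (x : EReal) < b}, f x with hM
      have hM0 : 0 ≤ M := integral_nonneg fun x => (hfpos x).le
      set t := (M + 1) / f q
      have ht : F (γ t) = (M + 1) := by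
        rw [hlin]; simp only [t]; field_simp [(hfpos q).ne']
      have hlt : q < γ t := (hFm.lt_iff_lt hqI (hγI t)).1 (by rw [ht, hFq]; linarith)
      have h2 : F (γ t) ≤ M := by
        simp only [hF]
        rw [intervalIntegral.integral_of_le hlt.le, integral_Ioc_eq_integral_Ioo]
        exact setIntegral_mono_set hi (Filter.Eventually.of_forall fun x => (hfpos x).le)
          (LE.le.eventuallyLE fun x hx =>
            ⟨hx.1, (EReal.coe_lt_coe_iff.2 hx.2).trans (hγI t).2⟩)
      linarith
  · rintro ⟨hL, hR⟩
    have hup : ∀ M : ℝ, ∃ x ∈ I, M < F x := by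
      by_contra! hcon
      obtain ⟨M, hM⟩ := hcon
      apply hR
      have := aux_union (ι := {r : ℚ // q < r ∧ (r : ℝ) ∈ I}) (fun r => Ioo q (r.1 : ℝ))
        (by
          apply Monotone.directed_le
          intro r s hrs
          exact Ioo_subset_Ioo_right (by exact_mod_cast hrs))
        (fun _ => measurableSet_Ioo) f (fun x => (hfpos x).le)
        (fun r => ((hint q hqI _ r.2.2).1).mono_set Ioo_subset_Ioc_self) M
        (fun r => by
          have := hM _ r.2.2
          simp only [hF] at this
          rwa [intervalIntegral.integral_of_le r.2.1.le, integral_Ioc_eq_integral_Ioo] at this)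
      refine this.mono_set ?_
      rintro x ⟨hx1, hx2⟩
      obtain ⟨r, hr1, hr2⟩ := EReal.exists_rat_btwn_of_lt hx2
      have hr1 : x < r := by exact_mod_cast hr1
      have hr2 : ((r : ℝ) : EReal) < b := hr2
      exact mem_iUnion.2 ⟨⟨r, hx1.trans hr1,
        hq.1.trans (EReal.coe_lt_coe_iff.2 (hx1.trans hr1)), hr2⟩, hx1, hr1⟩
    have hdn : ∀ M : ℝ, ∃ x ∈ I, F x < M := by
      by_contra! hcon
      obtain ⟨M, hM⟩ := hcon
      apply hL
      have := aux_union (ι := {r : ℚ // r < q ∧ (r : ℝ) ∈ I}) (fun r => Ioo (r.1 : ℝ) q)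
        (by
          apply Antitone.directed_le
          intro r s hrs
          exact Ioo_subset_Ioo_left (by exact_mod_cast hrs))
        (fun _ => measurableSet_Ioo) f (fun x => (hfpos x).le)
        (fun r => ((hint _ r.2.2 q hqI).1).mono_set Ioo_subset_Ioc_self) (-M)
        (fun r => by
          have := hM _ r.2.2
          simp only [hF] at this
          rw [intervalIntegral.integral_symm, intervalIntegral.integral_of_le r.2.1.le,
            integral_Ioc_eq_integral_Ioo] at this
          linarith)
      refine this.mono_set ?_
      rintro x ⟨hx1, hx2⟩
      obtain ⟨r, hr1, hr2⟩ := EReal.exists_rat_btwn_of_lt hx1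
      have hr2 : r < x := by exact_mod_cast hr2
      have hr1 : a < ((r : ℝ) : EReal) := hr1
      exact mem_iUnion.2 ⟨⟨r, hr2.trans hx2,
        hr1, (EReal.coe_lt_coe_iff.2 (hr2.trans hx2)).trans hq.2⟩, hr2, hx2⟩
    have hsurj : ∀ y : ℝ, ∃ x ∈ I, F x = y := by
      intro y
      obtain ⟨u, hu, hu'⟩ := hdn y
      obtain ⟨v, hv, hv'⟩ := hup y
      exact hIc.isPreconnected.intermediate_value hu hv hFc ⟨hu'.le, hv'.le⟩
    choose G hGI hG using hsurj
    have hGF : ∀ x ∈ I, G (F x) = x := fun x hx => hFm.injOn (hGI _) hx (hG _)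
    have hGm : StrictMono G := fun x y hxy =>
      (hFm.lt_iff_lt (hGI x) (hGI y)).1 (by rwa [hG, hG])
    have hGc : ∀ y, ContinuousAt G y := by
      intro y
      refine (hGm.strictMonoOn univ).continuousAt_of_image_mem_nhds Filter.univ_mem ?_
      exact Filter.mem_of_superset (hIo.mem_nhds (hGI y)) fun x hx => ⟨F x, mem_univ _, hGF x hx⟩
    have hGd : ∀ y, HasDerivAt G (f (G y))⁻¹ y := fun y =>
      HasDerivAt.of_local_left_inverse (hGc y) (hFd _ (hGI y)) (hfpos _).ne'
        (Filter.Eventually.of_forall hG)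
    set γ : ℝ → ℝ := fun t => G (f q * t) with hγdef
    have hγI : ∀ t, γ t ∈ I := fun t => hGI _
    have hγd : ∀ t, HasDerivAt γ (f q * Real.exp (-α (γ t))) t := by
      intro t
      have h := (hGd (f q * t)).comp t ((hasDerivAt_id t).const_mul (f q))
      refine h.congr_deriv ?_
      simp only [hf, hγdef, Real.exp_neg]
      ring
    have hγ' : deriv γ = fun t => f q * Real.exp (-α (γ t)) := funext fun t => (hγd t).deriv
    have hγdiff : Differentiable ℝ γ := fun t => (hγd t).differentiableAt
    have hγ1 : ContDiff ℝ 1 γ := by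
      rw [contDiff_one_iff_deriv]
      refine ⟨hγdiff, ?_⟩
      rw [hγ']
      exact continuous_const.mul
        (hα.continuousOn.comp_continuous hγdiff.continuous hγI).neg.rexp
    have hαγ : ContDiff ℝ 1 (fun t => α (γ t)) := hα.comp_contDiff hγ1 hγI
    have h0 : γ 0 = q := by
      have := hGF q hqI
      rw [hFq] at this
      simpa [hγdef] using this
    refine ⟨γ, ?_, hγI, ?_, h0, ?_⟩
    · rw [← one_add_one_eq_two, contDiff_succ_iff_deriv]
      refine ⟨hγdiff, by simp, ?_⟩
      rw [hγ']
      exact contDiff_const.mul hαγ.neg.exp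
    · intro t
      have h2 := (((hαd _ (hγI t)).comp t (hγd t)).neg.exp).const_mul (f q)
      have h3 : deriv (deriv γ) t = f q * (Real.exp (-α (γ t)) *
          -(deriv α (γ t) * (f q * Real.exp (-α (γ t))))) := by
        rw [hγ']
        exact h2.deriv
      rw [h3, hγ']
      ring
    · rw [hγ']
      simp only [h0, hf, ← Real.exp_add]
      simp
end

section
/- Set r_± = M ± √(M² − Q²). Then: (i) for every r > 0, 1 − 2M/r + Q²/r² = (r − r_+)(r − r_−)/r²; (ii) f(r) = 1 − 2M/r + Q²/r² is strictly positive for all r > r_+; (iii) for every R > r_+, the function r ↦ f(r)^{−1} is not Lebesgue-integrable on (r_+, R) and is not Lebesgue-integrable on (R, ∞). -/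
open MeasureTheory Set

/-- Reissner–Nordström: for `M > 0`, `Q² < M²`, and `r_± = M ± √(M² − Q²)`:
(i) `1 − 2M/r + Q²/r² = (r − r₊)(r − r₋)/r²` for `r > 0`;
(ii) `f(r) = 1 − 2M/r + Q²/r² > 0` for `r > r₊`;
(iii) for every `R > r₊`, `f⁻¹` is not Lebesgue-integrable on `(r₊, R)` nor on `(R, ∞)`. -/
theorem stmt_6 (M Q : ℝ) (hM : 0 < M) (hQ : Q ^ 2 < M ^ 2) :
    (∀ r : ℝ, 0 < r →
      1 - 2 * M / r + Q ^ 2 / r ^ 2 =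
        (r - (M + Real.sqrt (M ^ 2 - Q ^ 2))) * (r - (M - Real.sqrt (M ^ 2 - Q ^ 2))) / r ^ 2) ∧
    (∀ r : ℝ, M + Real.sqrt (M ^ 2 - Q ^ 2) < r → 0 < 1 - 2 * M / r + Q ^ 2 / r ^ 2) ∧
    (∀ R : ℝ, M + Real.sqrt (M ^ 2 - Q ^ 2) < R →
      ¬ IntegrableOn (fun r : ℝ => (1 - 2 * M / r + Q ^ 2 / r ^ 2)⁻¹)
          (Set.Ioo (M + Real.sqrt (M ^ 2 - Q ^ 2)) R) ∧
      ¬ IntegrableOn (fun r : ℝ => (1 - 2 * M / r + Q ^ 2 / r ^ 2)⁻¹) (Set.Ioi R)) := by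
  have hs2 : Real.sqrt (M ^ 2 - Q ^ 2) ^ 2 = M ^ 2 - Q ^ 2 := Real.sq_sqrt (by linarith)
  have hs : 0 < Real.sqrt (M ^ 2 - Q ^ 2) := Real.sqrt_pos.2 (by linarith)
  generalize Real.sqrt (M ^ 2 - Q ^ 2) = s at hs hs2 ⊢
  have h1 : ∀ r : ℝ, 0 < r →
      1 - 2 * M / r + Q ^ 2 / r ^ 2 = (r - (M + s)) * (r - (M - s)) / r ^ 2 := by
    intro r hr
    field_simp
    linear_combination hs2
  have h2 : ∀ r : ℝ, M + s < r → 0 < 1 - 2 * M / r + Q ^ 2 / r ^ 2 := by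
    intro r hr
    have hr0 : 0 < r := by linarith
    rw [h1 r hr0]
    have ha : 0 < r - (M + s) := by linarith
    have hb : 0 < r - (M - s) := by linarith
    positivity
  refine ⟨h1, h2, fun R hR => ⟨fun h => ?_, fun h => ?_⟩⟩
  · have hn : ¬ IntervalIntegrable (fun x : ℝ => (x - (M + s))⁻¹) volume (M + s) R := by
      rw [intervalIntegrable_sub_inv_iff]
      push Not
      exact ⟨hR.ne, left_mem_uIcc⟩
    apply hn
    rw [intervalIntegrable_iff_integrableOn_Ioo_of_le hR.le]
    refine Integrable.mono' (h.const_mul ((R - (M - s)) / (M + s) ^ 2)) ?_ ?_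
    · exact (measurable_id.sub_const _).inv.aestronglyMeasurable
    · refine (ae_restrict_mem measurableSet_Ioo).mono fun r hr => ?_
      obtain ⟨hr1, hr2⟩ := hr
      have hr0 : 0 < r := by linarith
      have ha : 0 < r - (M + s) := by linarith
      have hb : 0 < r - (M - s) := by linarith
      have hp : 0 < M + s := by linarith
      rw [Real.norm_of_nonneg (inv_nonneg.2 ha.le), h1 r hr0]
      have e : (R - (M - s)) / (M + s) ^ 2 * ((r - (M + s)) * (r - (M - s)) / r ^ 2)⁻¹
          = (r - (M + s))⁻¹ * (((R - (M - s)) / (r - (M - s))) * (r ^ 2 / (M + s) ^ 2)) := by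
        field_simp
      rw [e]
      refine le_mul_of_one_le_right (inv_nonneg.2 ha.le) (one_le_mul_of_one_le_of_one_le ?_ ?_)
      · rw [one_le_div hb]; linarith
      · rw [one_le_div (by positivity)]; gcongr
  · have hc : IntegrableOn (fun _ : ℝ => (1 : ℝ)) (Set.Ioi R) := by
      refine Integrable.mono' h aestronglyMeasurable_const ?_
      refine (ae_restrict_mem measurableSet_Ioi).mono fun r hr => ?_
      have hr1 : R < r := hr
      have hr0 : 0 < r := by linarith
      rw [norm_one]
      refine (one_le_inv₀ (h2 r (by linarith))).2 ?_
      rw [h1 r hr0, div_le_one (by positivity)]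
      nlinarith [mul_pos hM hr0, mul_pos hM (show 0 < r - M by linarith)]
    rw [integrableOn_const_iff] at hc
    simp at hc
end

section
/- Set A = arccos(3√3·M/L), r_0 = (2L/√3)·cos(−π/3 + A/3) and r_1 = (2L/√3)·cos(π/3 + A/3), so that 0 < r_1 < r_0. Then: (i) V(r) = 1 − 2M/r − r²/L² is strictly positive for all r with r_1 < r < r_0; (ii) for every R with r_1 < R < r_0, the function r ↦ V(r)^{−1} is not Lebesgue-integrable on (r_1, R) and is not Lebesgue-integrable on (R, r_0). -/
open MeasureTheory Set

theorem nonint_aux (a b c C : ℝ) (hab : a < b) (hc : c ∈ Icc a b) (f : ℝ → ℝ)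
    (hf : ∀ x ∈ Ioo a b, |(x - c)⁻¹| ≤ C * f x) : ¬ IntegrableOn f (Ioo a b) := by
  intro hi
  have h1 : IntegrableOn (fun x => (x - c)⁻¹) (Ioo a b) := by
    refine Integrable.mono' (hi.const_mul C) ?_ ?_
    · exact Measurable.aestronglyMeasurable (by fun_prop)
    · exact (ae_restrict_iff' measurableSet_Ioo).2 (Filter.Eventually.of_forall hf)
  have h2 : IntervalIntegrable (fun x => (x - c)⁻¹) volume a b := by
    rw [intervalIntegrable_iff_integrableOn_Ioo_of_le hab.le]
    exact h1
  rw [intervalIntegrable_sub_inv_iff] at h2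
  rcases h2 with h2 | h2
  · exact hab.ne h2
  · exact h2 (by rwa [uIcc_of_le hab.le])

theorem root_aux (M L A φ : ℝ) (hL : 0 < L) (hA : Real.cos A = 3 * Real.sqrt 3 * M / L)
    (hφ : Real.cos (3 * φ) = - Real.cos A) :
    (2 * L / Real.sqrt 3 * Real.cos φ) ^ 3 - L ^ 2 * (2 * L / Real.sqrt 3 * Real.cos φ)
      + 2 * M * L ^ 2 = 0 := by
  rw [Real.cos_three_mul, hA] at hφ
  have hs : Real.sqrt 3 ^ 2 = 3 := Real.sq_sqrt (by norm_num)
  have hs0 : 0 < Real.sqrt 3 := Real.sqrt_pos.2 (by norm_num)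
  generalize Real.sqrt 3 = s at *
  generalize Real.cos φ = c at *
  have hs3 : s ^ 3 = 3 * s := by rw [pow_succ, hs]
  field_simp at hφ
  field_simp
  rw [hs3, hs]
  linear_combination 2 * L ^ 2 * hφ

/-- Schwarzschild–de Sitter, `L, M > 0`, `27M² < L²`, `A = arccos(3√3 M/L)`,
`r₀ = (2L/√3) cos(−π/3 + A/3)`, `r₁ = (2L/√3) cos(π/3 + A/3)`, so `0 < r₁ < r₀`.
Then `V(r) = 1 − 2M/r − r²/L² > 0` on `(r₁, r₀)`, and for every `R ∈ (r₁, r₀)` the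
function `V⁻¹` is not Lebesgue-integrable on `(r₁, R)` nor on `(R, r₀)`. -/
theorem stmt_9 (M L : ℝ) (hM : 0 < M) (hL : 0 < L) (h : 27 * M ^ 2 < L ^ 2) :
    let A : ℝ := Real.arccos (3 * Real.sqrt 3 * M / L)
    let r₀ : ℝ := 2 * L / Real.sqrt 3 * Real.cos (-(Real.pi / 3) + A / 3)
    let r₁ : ℝ := 2 * L / Real.sqrt 3 * Real.cos (Real.pi / 3 + A / 3)
    0 < r₁ ∧ r₁ < r₀ ∧
    (∀ r : ℝ, r₁ < r → r < r₀ → 0 < 1 - 2 * M / r - r ^ 2 / L ^ 2) ∧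
    (∀ R : ℝ, r₁ < R → R < r₀ →
      ¬ IntegrableOn (fun r : ℝ => (1 - 2 * M / r - r ^ 2 / L ^ 2)⁻¹) (Set.Ioo r₁ R) ∧
      ¬ IntegrableOn (fun r : ℝ => (1 - 2 * M / r - r ^ 2 / L ^ 2)⁻¹) (Set.Ioo R r₀)) := by
  intro A r₀ r₁
  have hs : Real.sqrt 3 ^ 2 = 3 := Real.sq_sqrt (by norm_num)
  have hs0 : 0 < Real.sqrt 3 := Real.sqrt_pos.2 (by norm_num)
  have hx0 : 0 < 3 * Real.sqrt 3 * M / L := by positivity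
  have hx1 : 3 * Real.sqrt 3 * M / L < 1 := by
    rw [div_lt_one hL]
    apply lt_of_pow_lt_pow_left₀ 2 hL.le
    calc (3 * Real.sqrt 3 * M) ^ 2 = 9 * Real.sqrt 3 ^ 2 * M ^ 2 := by ring
      _ = 27 * M ^ 2 := by rw [hs]; ring
      _ < _ := h
  have hA : Real.cos A = 3 * Real.sqrt 3 * M / L :=
    Real.cos_arccos (by linarith) hx1.le
  have hA0 : 0 < A := Real.arccos_pos.2 hx1
  have hA1 : A < Real.pi / 2 := Real.arccos_lt_pi_div_two.2 hx0
  have hpi := Real.pi_pos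
  have e0 : r₀ ^ 3 - L ^ 2 * r₀ + 2 * M * L ^ 2 = 0 := by
    refine root_aux M L A _ hL hA ?_
    rw [show 3 * (-(Real.pi / 3) + A / 3) = A - Real.pi by ring, Real.cos_sub_pi]
  have e1 : r₁ ^ 3 - L ^ 2 * r₁ + 2 * M * L ^ 2 = 0 := by
    refine root_aux M L A _ hL hA ?_
    rw [show 3 * (Real.pi / 3 + A / 3) = A + Real.pi by ring, Real.cos_add_pi]
  have p1 : 0 < r₁ :=
    mul_pos (by positivity) (Real.cos_pos_of_mem_Ioo ⟨by linarith, by linarith⟩)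
  have p01 : r₁ < r₀ := by
    refine mul_lt_mul_of_pos_left ?_ (by positivity)
    rw [← Real.cos_neg (-(Real.pi / 3) + A / 3)]
    exact Real.cos_lt_cos_of_nonneg_of_le_pi (by linarith) (by linarith) (by linarith)
  clear_value r₀ r₁ A
  have q : r₀ ^ 2 + r₀ * r₁ + r₁ ^ 2 = L ^ 2 := by
    have : r₀ - r₁ ≠ 0 := by linarith
    apply mul_left_cancel₀ this
    linear_combination e0 - e1
  have V : ∀ r : ℝ, 0 < r → 1 - 2 * M / r - r ^ 2 / L ^ 2
      = (r - r₁) * (r₀ - r) * (r + r₀ + r₁) / (L ^ 2 * r) := by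
    intro r hr
    field_simp
    linear_combination (r₁ - r) * q - e1
  have p0 : 0 < r₀ := p1.trans p01
  have Vp : ∀ r : ℝ, r₁ < r → r < r₀ → 0 < 1 - 2 * M / r - r ^ 2 / L ^ 2 := by
    intro r h1 h0
    have hr : 0 < r := p1.trans h1
    rw [V r hr]
    have := sub_pos.2 h1
    have := sub_pos.2 h0
    positivity
  have key : ∀ r : ℝ, r₁ < r → r < r₀ → ∀ d e : ℝ, 0 < d → 0 < e → e ≤ r₀ - r₁ →
      (r - r₁) * (r₀ - r) = d * e →
      d⁻¹ ≤ (r₀ - r₁) * (3 * r₀) / (L ^ 2 * r₁) * (1 - 2 * M / r - r ^ 2 / L ^ 2)⁻¹ := by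
    intro r h1 h0 d e hd he hle hde
    have hr : 0 < r := p1.trans h1
    have hv := Vp r h1 h0
    rw [← div_eq_mul_inv, le_div_iff₀ hv, V r hr, hde, inv_mul_le_iff₀ hd]
    rw [mul_assoc d e, mul_div_assoc d]
    refine mul_le_mul_of_nonneg_left ?_ hd.le
    have h01 := sub_pos.2 p01
    gcongr
    linarith
  refine ⟨p1, p01, Vp, fun R h1 h0 => ⟨?_, ?_⟩⟩
  · refine nonint_aux r₁ R r₁ ((r₀ - r₁) * (3 * r₀) / (L ^ 2 * r₁)) h1 ⟨le_rfl, h1.le⟩ _ (fun x hx => ?_)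
    have := hx.1
    have := hx.2
    rw [abs_of_pos (inv_pos.2 (by linarith))]
    exact key x hx.1 (by linarith) (x - r₁) (r₀ - x) (by linarith) (by linarith) (by linarith) rfl
  · refine nonint_aux R r₀ r₀ ((r₀ - r₁) * (3 * r₀) / (L ^ 2 * r₁)) h0 ⟨h0.le, le_rfl⟩ _ (fun x hx => ?_)
    have := hx.1
    have := hx.2
    rw [abs_inv, abs_sub_comm, abs_of_pos (show 0 < r₀ - x by linarith)]
    exact key x (by linarith) hx.2 (r₀ - x) (x - r₁) (by linarith) (by linarith) (by linarith) (mul_comm _ _)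
end
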